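/- arXiv:math/0101026 — 7 statements merged into one kernel-verified Lean document; each statement's English description precedes it below -/
import Mathlib

section
/- Let G be a group acting on ℝ by orientation-preserving homeomorphisms such that the action is minimal (every orbit is dense in ℝ). Then at least one of the following holds: (i) for any two nondegenerate compact intervals I, J ⊆ ℝ there exists g ∈ G with g(I) ⊆ J; or (ii) there is an orientation-preserving homeomorphism h : ℝ → ℝ such that for every g ∈ G the conjugate h ∘ g ∘ h⁻¹ commutes with the unit translation x ↦ x + 1 (i.e. G is conjugate in Homeo(ℝ) to a group of lifts of circle homeomorphisms). [This is the real-line instance of the paper's dichotomy theorem for minimal group actions on simply connected one-manifolds with one-sided branching.] -/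
namespace MAD

lemma zs (e : ℝ ≃o ℝ) (n : ℤ) (x : ℝ) : (e ^ (n + 1)) x = e ((e ^ n) x) := by
  rw [add_comm, zpow_add, zpow_one]; rfl

lemma za (e : ℝ ≃o ℝ) (n m : ℤ) (x : ℝ) : (e ^ (n + m)) x = (e ^ n) ((e ^ m) x) := by
  rw [zpow_add]; rfl

lemma orbit_image (e : ℝ ≃o ℝ) (q : ℝ) :
    e '' (Set.range fun n : ℤ => (e ^ n) q) = Set.range fun n : ℤ => (e ^ n) q := by
  ext y
  constructor
  · rintro ⟨_, ⟨n, rfl⟩, rfl⟩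
    exact ⟨n + 1, zs e n q⟩
  · rintro ⟨n, rfl⟩
    refine ⟨_, ⟨n - 1, rfl⟩, ?_⟩
    have := zs e (n - 1) q
    simp only [sub_add_cancel] at this
    exact this.symm

lemma fix_sup (e : ℝ ≃o ℝ) (q s : ℝ) (hs : IsLUB (Set.range fun n : ℤ => (e ^ n) q) s) :
    e s = s := by
  have h := (e.isLUB_image').2 hs
  rw [orbit_image] at h
  exact h.unique hs

lemma fix_inf (e : ℝ ≃o ℝ) (q s : ℝ) (hs : IsGLB (Set.range fun n : ℤ => (e ^ n) q) s) :
    e s = s := by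
  have h := (e.isGLB_image').2 hs
  rw [orbit_image] at h
  exact h.unique hs

lemma zpow_fix (e : ℝ ≃o ℝ) (p : ℝ) (hp : e p = p) (n : ℤ) : (e ^ n) p = p := by
  have h1 : ∀ n : ℤ, (e ^ (n + 1)) p = (e ^ n) p := by
    intro n
    rw [za, zpow_one, hp]
  induction n using Int.induction_on with
  | zero => simp
  | succ n ih => rw [h1, ih]
  | pred n ih =>
    have := h1 (-(n : ℤ) - 1)
    rw [sub_add_cancel] at this
    rw [← this, ih]

lemma zmono (T : ℝ ≃o ℝ) (hT : ∀ x, x < T x) (x : ℝ) : StrictMono fun n : ℤ => (T ^ n) x := by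
  apply strictMono_int_of_lt_succ
  intro n
  rw [zs]
  exact hT _

lemma floor_ex (T : ℝ ≃o ℝ) (hT : ∀ x, x < T x) (x : ℝ) :
    ∃ n : ℤ, (T ^ n) 0 ≤ x ∧ x < (T ^ (n + 1)) 0 := by
  have hm := zmono T hT 0
  have up : ∃ n : ℤ, x < (T ^ n) 0 := by
    by_contra! h
    have hb : BddAbove (Set.range fun n : ℤ => (T ^ n) 0) := ⟨x, by rintro _ ⟨n, rfl⟩; exact h n⟩
    have := fix_sup T 0 _ (isLUB_csSup (Set.range_nonempty _) hb)
    exact (hT _).ne' this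
  have dn : ∃ n : ℤ, (T ^ n) 0 ≤ x := by
    by_contra! h
    have hb : BddBelow (Set.range fun n : ℤ => (T ^ n) 0) :=
      ⟨x, by rintro _ ⟨n, rfl⟩; exact (h n).le⟩
    have := fix_inf T 0 _ (isGLB_csInf (Set.range_nonempty _) hb)
    exact (hT _).ne' this
  obtain ⟨N, hN⟩ := up
  obtain ⟨n, h1, h2⟩ := Int.exists_greatest_of_bdd (P := fun n => (T ^ n) 0 ≤ x)
    ⟨N, fun z hz => (hm.lt_iff_lt.1 (lt_of_le_of_lt hz hN)).le⟩ dn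
  refine ⟨n, h1, ?_⟩
  by_contra! h
  have := h2 _ h
  omega

lemma conj (T : ℝ ≃o ℝ) (hT : ∀ x, x < T x) : ∃ k : ℝ ≃o ℝ, ∀ t, k (t + 1) = T (k t) := by
  have hT0 := hT 0
  set k : ℝ → ℝ := fun t => (T ^ ⌊t⌋) (Int.fract t * T 0) with hk
  have hlow : ∀ t, (T ^ ⌊t⌋) 0 ≤ k t := fun t =>
    (T ^ ⌊t⌋).monotone (mul_nonneg (Int.fract_nonneg t) hT0.le)
  have hhigh : ∀ t, k t < (T ^ (⌊t⌋ + 1)) 0 := by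
    intro t
    rw [za, zpow_one]
    apply (T ^ ⌊t⌋).strictMono
    have := Int.fract_lt_one t
    nlinarith
  have hmono : StrictMono k := by
    intro t t' htt
    rcases (Int.floor_mono htt.le).eq_or_lt with h | h
    · simp only [hk]
      rw [← h]
      apply (T ^ ⌊t⌋).strictMono
      apply mul_lt_mul_of_pos_right _ hT0
      rw [Int.fract, Int.fract, ← h]
      linarith
    · calc k t < (T ^ (⌊t⌋ + 1)) 0 := hhigh t
        _ ≤ (T ^ ⌊t'⌋) 0 := (zmono T hT 0).monotone (by omega)
        _ ≤ k t' := hlow t'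
  have hsurj : Function.Surjective k := by
    intro x
    obtain ⟨n, h1, h2⟩ := floor_ex T hT x
    obtain ⟨y, rfl⟩ := (T ^ n).surjective x
    rw [za, zpow_one, OrderIso.lt_iff_lt] at h2
    rw [OrderIso.le_iff_le] at h1
    have a1 : 0 ≤ y / T 0 := by positivity
    have a2 : y / T 0 < 1 := (div_lt_one hT0).2 h2
    refine ⟨n + y / T 0, ?_⟩
    have f1 : ⌊(n : ℝ) + y / T 0⌋ = n := by
      rw [Int.floor_eq_iff]; constructor <;> linarith
    have f2 : Int.fract ((n : ℝ) + y / T 0) = y / T 0 := by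
      rw [Int.fract, f1]; ring
    simp only [hk]
    rw [f1, f2, div_mul_cancel₀ _ hT0.ne']
  refine ⟨StrictMono.orderIsoOfSurjective k hmono hsurj, fun t => ?_⟩
  simp only [StrictMono.coe_orderIsoOfSurjective, hk]
  rw [Int.floor_add_one, Int.fract_add_one, zs]

lemma finish {G : Type*} [Group G] (ρ : G →* (ℝ ≃o ℝ)) (T : ℝ ≃o ℝ) (hT : ∀ x, x < T x)
    (hc : ∀ g x, ρ g (T x) = T (ρ g x)) :
    ∃ h : ℝ ≃o ℝ, ∀ (g : G) (x : ℝ),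
        h (ρ g (h.symm (x + 1))) = h (ρ g (h.symm x)) + 1 := by
  obtain ⟨k, hk⟩ := conj T hT
  refine ⟨k.symm, fun g x => ?_⟩
  simp only [OrderIso.symm_symm]
  rw [hk, hc, OrderIso.symm_apply_eq, hk, OrderIso.apply_symm_apply]

lemma abel {G : Type*} [Group G] (ρ : G →* (ℝ ≃o ℝ))
    (hmin : ∀ x : ℝ, Dense (Set.range fun g : G => ρ g x))
    (hfree : ∀ g p q, ρ g p = p → ρ g q = q) :
    ∃ T : ℝ ≃o ℝ, (∀ x, x < T x) ∧ ∀ g x, ρ g (T x) = T (ρ g x) := by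
  have hone : ∀ g x, x < ρ g x → ∀ y, y < ρ g y := by
    intro g x hx y
    by_contra! h
    have hcont : Continuous fun z => ρ g z - z := (ρ g).continuous.sub continuous_id
    obtain ⟨z, hz⟩ := mem_range_of_exists_le_of_exists_ge hcont
      ⟨y, sub_nonpos.2 h⟩ ⟨x, (sub_pos.2 hx).le⟩
    have := hfree g z x (by linarith)
    exact hx.ne' this
  have happ : ∀ f g : G, ∀ x, ρ (f⁻¹ * g) x = (ρ f).symm (ρ g x) := by
    intro f g x; rw [map_mul, map_inv]; rfl
  have hlt : ∀ f g x, ρ f x < ρ g x → ∀ y, ρ f y < ρ g y := by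
    intro f g x hx y
    have := hone (f⁻¹ * g) x (by rw [happ, OrderIso.lt_symm_apply]; exact hx) y
    rwa [happ, OrderIso.lt_symm_apply] at this
  have hle : ∀ f g x, ρ f x ≤ ρ g x → ∀ y, ρ f y ≤ ρ g y := by
    intro f g x hx y
    by_contra! h
    exact absurd (hlt g f y h x) (not_lt.2 hx)
  have hdense : ∀ x c d, c < d → ∃ g, c < ρ g x ∧ ρ g x < d := by
    intro x c d hcd
    obtain ⟨_, ⟨g, rfl⟩, h⟩ := (hmin x).exists_between hcd |>.imp fun _ h => h
    exact ⟨g, h.1, h.2⟩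
  have key : ∀ a b : G, ¬ ρ b (ρ a 0) < ρ a (ρ b 0) := by
    intro a b hab
    obtain ⟨e1, h1, h1'⟩ := hdense (ρ b (ρ a 0)) _ _ hab
    obtain ⟨e2, h2, h2'⟩ := hdense (ρ e1 (ρ b (ρ a 0))) _ _ h1'
    have : ∃ e, (∀ x, x < ρ e x) ∧ ρ e (ρ e (ρ b (ρ a 0))) < ρ a (ρ b 0) := by
      rcases le_total (ρ e1 0) (ρ e2 0) with h | h
      · exact ⟨e1, hone _ _ h1, lt_of_le_of_lt (hle _ _ _ h _) h2'⟩
      · refine ⟨e2, hone _ _ h2, lt_of_le_of_lt ((ρ e2).monotone (hle _ _ _ h _)) h2'⟩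
    obtain ⟨e, he, hee⟩ := this
    obtain ⟨m, m1, m2⟩ := floor_ex (ρ e) he (ρ a 0)
    obtain ⟨n, n1, n2⟩ := floor_ex (ρ e) he (ρ b 0)
    have b1 : ρ a (ρ b 0) < ((ρ e) ^ (m + 1 + (n + 1))) 0 := by
      rw [za]
      refine ((ρ a).strictMono n2).trans ?_
      rw [← map_zpow] at m2
      have := hlt _ _ _ m2 ((ρ e ^ (n + 1)) 0)
      rwa [map_zpow] at this
    have b2 : ((ρ e) ^ (n + m)) 0 ≤ ρ b (ρ a 0) := by
      rw [za]
      refine ((ρ e ^ n).monotone m1).trans ?_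
      rw [← map_zpow] at n1 ⊢
      exact hle _ _ _ n1 _
    have b3 := (ρ e).monotone ((ρ e).monotone b2)
    rw [← zs, ← zs] at b3
    rw [show m + 1 + (n + 1) = n + m + 1 + 1 by ring] at b1
    linarith
  obtain ⟨t, ht, -⟩ := hdense 0 0 1 one_pos
  refine ⟨ρ t, hone _ _ ht, fun g x => ?_⟩
  have h0 : ρ (g * t) 0 = ρ (t * g) 0 := by
    rw [map_mul, map_mul]
    exact le_antisymm (not_lt.1 (key g t)) (not_lt.1 (key t g))
  have := le_antisymm (hle _ _ _ h0.le x) (hle _ _ _ h0.ge x)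
  rw [map_mul, map_mul] at this
  exact this

end MAD

open MAD in
theorem minimal_action_dichotomy {G : Type*} [Group G] (ρ : G →* (ℝ ≃o ℝ))
    (hmin : ∀ x : ℝ, Dense (Set.range fun g : G => ρ g x)) :
    (∀ a b c d : ℝ, a < b → c < d →
        ∃ g : G, (ρ g) '' Set.Icc a b ⊆ Set.Icc c d) ∨
    (∃ h : ℝ ≃o ℝ, ∀ (g : G) (x : ℝ),
        h (ρ g (h.symm (x + 1))) = h (ρ g (h.symm x)) + 1) := by
  have hdense : ∀ x c d, c < d → ∃ g, c < ρ g x ∧ ρ g x < d := by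
    intro x c d hcd
    obtain ⟨_, ⟨g, rfl⟩, h⟩ := (hmin x).exists_between hcd |>.imp fun _ h => h
    exact ⟨g, h.1, h.2⟩
  have hmul : ∀ f g x, ρ (f * g) x = ρ f (ρ g x) := by
    intro f g x; rw [map_mul]; rfl
  have hinv : ∀ g x, ρ g⁻¹ (ρ g x) = x := by
    intro g x; rw [← hmul]; simp
  let C : ℝ → ℝ → Prop := fun x y => ∀ c d, c < d → ∃ g, c ≤ ρ g x ∧ ρ g y ≤ d
  by_cases hall : ∀ a b, a < b → C a b
  · left
    intro a b c d hab hcd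
    obtain ⟨g, h1, h2⟩ := hall a b hab c d hcd
    refine ⟨g, ?_⟩
    rintro _ ⟨x, hx, rfl⟩
    exact ⟨h1.trans ((ρ g).monotone hx.1), ((ρ g).monotone hx.2).trans h2⟩
  right
  push Not at hall
  obtain ⟨a, b, hab, hnC⟩ := hall
  have Cmono : ∀ x x' y y', x ≤ x' → y' ≤ y → C x y → C x' y' := by
    intro x x' y y' hx hy h c d hcd
    obtain ⟨g, h1, h2⟩ := h c d hcd
    exact ⟨g, h1.trans ((ρ g).monotone hx), ((ρ g).monotone hy).trans h2⟩
  have Cinv : ∀ k x y, C x y → C (ρ k x) (ρ k y) := by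
    intro k x y h c d hcd
    obtain ⟨g, h1, h2⟩ := h c d hcd
    exact ⟨g * k⁻¹, by rwa [hmul, hinv], by rwa [hmul, hinv]⟩
  have Cinv' : ∀ k x y, C (ρ k x) (ρ k y) → C x y := by
    intro k x y h
    have := Cinv k⁻¹ _ _ h
    rwa [hinv, hinv] at this
  by_cases hex : ∃ u v, u < v ∧ C u v
  · obtain ⟨u, v, huv, hC⟩ := hex
    have hgt : ∀ x, ∃ y, x < y ∧ C x y := by
      intro x
      obtain ⟨g, h1, h2⟩ := hdense x u v huv
      refine ⟨(ρ g).symm v, (OrderIso.lt_symm_apply _).2 h2, Cinv' g _ _ ?_⟩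
      rw [OrderIso.apply_symm_apply]
      exact Cmono _ _ _ _ h1.le le_rfl hC
    have hbdd : ∀ x, BddAbove {y | C x y} := by
      intro x
      obtain ⟨g, h1, -⟩ := hdense a x (x + 1) (by linarith)
      refine ⟨ρ g b, fun y hy => ?_⟩
      by_contra! h
      exact hnC (Cinv' g _ _ (Cmono _ _ _ _ h1.le h.le hy))
    have hlub : ∀ x, ∃ t, IsLUB {y | C x y} t := fun x =>
      ⟨_, isLUB_csSup ((hgt x).imp fun _ h => h.2) (hbdd x)⟩
    choose T hT using hlub
    have Tgt : ∀ x, x < T x := by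
      intro x
      obtain ⟨y, h1, h2⟩ := hgt x
      exact h1.trans_le ((hT x).1 h2)
    have Tmono : Monotone T := by
      intro x x' h
      exact (hT x).mono (hT x') fun y hy => Cmono _ _ _ _ h le_rfl hy
    have Tc : ∀ g x, ρ g (T x) = T (ρ g x) := by
      intro g x
      have h := ((ρ g).isLUB_image').2 (hT x)
      have h2 : (ρ g) '' {y | C x y} = {y | C (ρ g x) y} := by
        ext y
        constructor
        · rintro ⟨z, hz, rfl⟩
          exact Cinv g _ _ hz
        · intro hy
          refine ⟨(ρ g).symm y, Cinv' g _ _ ?_, by simp⟩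
          rw [OrderIso.apply_symm_apply]
          exact hy
      rw [h2] at h
      exact h.unique (hT _)
    have Tdense : DenseRange T := by
      refine (hmin (T 0)).mono ?_
      rintro _ ⟨g, rfl⟩
      exact ⟨_, (Tc g 0).symm⟩
    have Tcont : Continuous T := Tmono.continuous_of_denseRange Tdense
    have Tsurj : Function.Surjective T := by
      apply Tcont.surjective
      · exact Filter.tendsto_atTop_mono (fun x => (Tgt x).le) Filter.tendsto_id
      · apply Filter.tendsto_atBot_atBot_of_monotone Tmono
        intro y
        obtain ⟨_, ⟨z, rfl⟩, h⟩ := Tdense.exists_between (sub_one_lt y)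
        exact ⟨z, h.2.le⟩
    have Tinj : Function.Injective T := by
      have main : ∀ p q, p < q → T p ≠ T q := by
        intro p q hpq heq
        have hlc : IsLocallyConstant T := by
          rw [IsLocallyConstant.iff_exists_open]
          intro x
          obtain ⟨g, h1, h2⟩ := hdense x p q hpq
          have hconst : ∀ z ∈ Set.Ioo p q, T z = T p := fun z hz =>
            le_antisymm ((Tmono hz.2.le).trans heq.ge) (Tmono hz.1.le)
          refine ⟨(ρ g) ⁻¹' Set.Ioo p q, isOpen_Ioo.preimage (ρ g).continuous, ⟨h1, h2⟩, ?_⟩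
          intro y hy
          apply (ρ g).injective
          rw [Tc, Tc, hconst _ hy, hconst _ ⟨h1, h2⟩]
        have := hlc.apply_eq_of_preconnectedSpace 0 (T 0)
        exact (Tgt (T 0)).ne this
      intro p q h
      rcases lt_trichotomy p q with h' | h' | h'
      · exact absurd h (main _ _ h')
      · exact h'
      · exact absurd h.symm (main _ _ h')
    refine finish ρ (StrictMono.orderIsoOfSurjective T (Tmono.strictMono_of_injective Tinj) Tsurj)
      ?_ ?_
    · simpa using Tgt
    · simpa using Tc
  · have hfree : ∀ g p q, ρ g p = p → ρ g q = q := by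
      intro g p q hp
      by_contra hq
      apply hex
      rcases lt_trichotomy p q with h | h | h
      · have hb : BddBelow (Set.range fun n : ℤ => ((ρ g) ^ n) q) := by
          refine ⟨p, ?_⟩
          rintro _ ⟨n, rfl⟩
          have := ((ρ g) ^ n).monotone h.le
          rwa [zpow_fix _ _ hp] at this
        have hs := isGLB_csInf (Set.range_nonempty _) hb
        set s := sInf (Set.range fun n : ℤ => ((ρ g) ^ n) q)
        have hfix := fix_inf _ _ _ hs
        have hsq : s < q := by
          refine lt_of_le_of_ne (hs.1 ⟨0, by simp⟩) ?_
          rintro h; rw [h] at hfix; exact hq hfix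
        refine ⟨s, q, hsq, fun c d hcd => ?_⟩
        obtain ⟨k, k1, k2⟩ := hdense s c d hcd
        obtain ⟨_, ⟨n, rfl⟩, -, hn⟩ := hs.exists_between ((OrderIso.lt_symm_apply _).2 k2)
        refine ⟨k * g ^ n, ?_, ?_⟩
        · rw [hmul, map_zpow, zpow_fix _ _ hfix]; exact k1.le
        · rw [hmul, map_zpow]; exact ((OrderIso.lt_symm_apply _).1 hn).le
      · exact absurd (h ▸ hp) hq
      · have hb : BddAbove (Set.range fun n : ℤ => ((ρ g) ^ n) q) := by
          refine ⟨p, ?_⟩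
          rintro _ ⟨n, rfl⟩
          have := ((ρ g) ^ n).monotone h.le
          rwa [zpow_fix _ _ hp] at this
        have hs := isLUB_csSup (Set.range_nonempty _) hb
        set s := sSup (Set.range fun n : ℤ => ((ρ g) ^ n) q)
        have hfix := fix_sup _ _ _ hs
        have hsq : q < s := by
          refine lt_of_le_of_ne (hs.1 ⟨0, by simp⟩) ?_
          rintro h; rw [← h] at hfix; exact hq hfix
        refine ⟨q, s, hsq, fun c d hcd => ?_⟩
        obtain ⟨k, k1, k2⟩ := hdense s c d hcd
        obtain ⟨_, ⟨n, rfl⟩, hn, -⟩ := hs.exists_between ((OrderIso.symm_apply_lt _).2 k1)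
        refine ⟨k * g ^ n, ?_, ?_⟩
        · rw [hmul, map_zpow]; exact ((OrderIso.symm_apply_lt _).1 hn).le
        · rw [hmul, map_zpow, zpow_fix _ _ hfix]; exact k2.le
    obtain ⟨T, h1, h2⟩ := abel ρ hmin hfree
    exact finish ρ T h1 h2
end

section
/- Let G be a group acting minimally on ℝ by orientation-preserving homeomorphisms, and suppose there is a nondegenerate compact interval [a,b] (a < b) which is incompressible, meaning no g ∈ G satisfies g([a,b]) ⊊ [a,b]. Then for every p ∈ ℝ the set {g(b) : g ∈ G, g(a) ≤ p} is nonempty and bounded above, so Z(p) := sup{g(b) : g ∈ G, g(a) ≤ p} is well-defined, and Z has the following properties: (1) Z(g(a)) = g(b) for every g ∈ G; (2) Z is strictly increasing and continuous; (3) Z(p) > p for every p ∈ ℝ; (4) Z commutes with the action: Z(g(p)) = g(Z(p)) for all g ∈ G and p ∈ ℝ; (5) the iterates of Z escape to +∞: for every y, x ∈ ℝ there is n ∈ ℕ with Zⁿ(y) ≥ x. -/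
/-- **The map `Z` associated to an incompressible interval.**

Let `G` act minimally on `ℝ` by orientation-preserving homeomorphisms, and let `[a,b]`
(`a < b`) be an incompressible interval: no `g ∈ G` maps `[a,b]` to a proper subset of itself.
Then for every `p` the set `{g(b) : g ∈ G, g(a) ≤ p}` is nonempty and bounded above, so
`Z p := sup {g(b) : g ∈ G, g(a) ≤ p}` is well defined, and `Z` satisfies:
(1) `Z (g a) = g b` for all `g ∈ G`;
(2) `Z` is strictly increasing and continuous;
(3) `Z p > p` for all `p`;
(4) `Z` commutes with the action of `G`;
(5) the iterates of `Z` escape to `+∞`. -/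
theorem incompressible_interval_sup_map {G : Type*} [Group G] (ρ : G →* (ℝ ≃o ℝ))
    (hmin : ∀ x : ℝ, Dense (Set.range fun g : G => ρ g x))
    (a b : ℝ) (hab : a < b)
    (hinc : ∀ g : G, ¬((ρ g) '' Set.Icc a b ⊂ Set.Icc a b)) :
    (∀ p : ℝ, {y : ℝ | ∃ g : G, ρ g a ≤ p ∧ ρ g b = y}.Nonempty ∧
        BddAbove {y : ℝ | ∃ g : G, ρ g a ≤ p ∧ ρ g b = y}) ∧
    ∀ Z : ℝ → ℝ, (∀ p : ℝ, Z p = sSup {y : ℝ | ∃ g : G, ρ g a ≤ p ∧ ρ g b = y}) →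
      (∀ g : G, Z (ρ g a) = ρ g b) ∧
      StrictMono Z ∧ Continuous Z ∧
      (∀ p : ℝ, p < Z p) ∧
      (∀ (g : G) (p : ℝ), Z (ρ g p) = ρ g (Z p)) ∧
      (∀ y x : ℝ, ∃ n : ℕ, x ≤ Z^[n] y) := by
  have key : ∀ k : G, ρ k a ≤ a → b ≤ ρ k b → ρ k a = a ∧ ρ k b = b := by
    intro k h1 h2
    by_contra hne
    apply hinc k⁻¹
    have e : ∀ x, ρ k⁻¹ x = (ρ k).symm x := by
      intro x
      rw [map_inv]
      rfl
    have h3 : a ≤ ρ k⁻¹ a := by rw [e, OrderIso.le_symm_apply]; exact h1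
    have h4 : ρ k⁻¹ b ≤ b := by rw [e, OrderIso.symm_apply_le]; exact h2
    have him : (ρ k⁻¹) '' Set.Icc a b = Set.Icc (ρ k⁻¹ a) (ρ k⁻¹ b) := OrderIso.image_Icc _ _ _
    rw [him]
    refine ⟨Set.Icc_subset_Icc h3 h4, fun hsub => hne ?_⟩
    have h5 := (hsub (Set.left_mem_Icc.2 hab.le)).1
    have h6 := (hsub (Set.right_mem_Icc.2 hab.le)).2
    rw [e, OrderIso.symm_apply_le] at h5
    rw [e, OrderIso.le_symm_apply] at h6
    exact ⟨le_antisymm h1 h5, le_antisymm h6 h2⟩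
  have key2 : ∀ g h : G, ρ g a ≤ ρ h a → ρ h b ≤ ρ g b → ρ g a = ρ h a ∧ ρ g b = ρ h b := by
    intro g h h1 h2
    have e : ∀ x, ρ (h⁻¹ * g) x = (ρ h).symm (ρ g x) := by
      intro x
      rw [map_mul, map_inv]
      rfl
    have := key (h⁻¹ * g) (by rw [e, OrderIso.symm_apply_le]; exact h1)
      (by rw [e, OrderIso.le_symm_apply]; exact h2)
    rw [e, e, OrderIso.symm_apply_eq, OrderIso.symm_apply_eq] at this
    exact this
  have kle : ∀ g h : G, ρ g a ≤ ρ h a → ρ g b ≤ ρ h b := by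
    intro g h h1
    by_contra hc
    exact absurd (key2 g h h1 (not_le.1 hc).le).2 (not_le.1 hc).ne'
  have klt : ∀ g h : G, ρ g a < ρ h a → ρ g b < ρ h b := by
    intro g h h1
    by_contra hc
    exact absurd (key2 g h h1.le (not_lt.1 hc)).1 h1.ne
  have dense : ∀ z x y : ℝ, x < y → ∃ g : G, x < ρ g z ∧ ρ g z < y := by
    intro z x y hxy
    obtain ⟨_, ⟨g, rfl⟩, h⟩ := (hmin z).exists_between hxy
    exact ⟨g, h⟩
  have hne : ∀ p : ℝ, {y : ℝ | ∃ g : G, ρ g a ≤ p ∧ ρ g b = y}.Nonempty := by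
    intro p
    obtain ⟨g, -, hg⟩ := dense a (p - 1) p (by linarith)
    exact ⟨_, g, hg.le, rfl⟩
  have hub : ∀ (p : ℝ) (h : G), p ≤ ρ h a →
      ρ h b ∈ upperBounds {y : ℝ | ∃ g : G, ρ g a ≤ p ∧ ρ g b = y} := by
    rintro p h hp _ ⟨g, hg, rfl⟩
    exact kle g h (hg.trans hp)
  have hbd : ∀ p : ℝ, BddAbove {y : ℝ | ∃ g : G, ρ g a ≤ p ∧ ρ g b = y} := by
    intro p
    obtain ⟨g, hg, -⟩ := dense a p (p + 1) (by linarith)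
    exact ⟨_, hub p g hg.le⟩
  refine ⟨fun p => ⟨hne p, hbd p⟩, fun Z hZ => ?_⟩
  have Zle : ∀ p (h : G), p ≤ ρ h a → Z p ≤ ρ h b := by
    intro p h hp
    rw [hZ]
    exact csSup_le (hne p) (hub p h hp)
  have leZ : ∀ p (h : G), ρ h a ≤ p → ρ h b ≤ Z p := by
    intro p h hp
    rw [hZ]
    exact le_csSup (hbd p) ⟨h, hp, rfl⟩
  have H1 : ∀ g : G, Z (ρ g a) = ρ g b := fun g =>
    le_antisymm (Zle _ g le_rfl) (leZ _ g le_rfl)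
  have H2 : StrictMono Z := by
    intro p q hpq
    obtain ⟨h, hh1, hh2⟩ := dense a p q hpq
    obtain ⟨g, hg1, hg2⟩ := dense a p _ hh1
    exact (Zle p g hg1.le).trans_lt ((klt g h hg2).trans_le (leZ q h hh2.le))
  have H3 : Continuous Z := by
    apply H2.monotone.continuous_of_denseRange
    refine (hmin b).mono ?_
    rintro _ ⟨g, rfl⟩
    exact ⟨ρ g a, H1 g⟩
  have H4 : ∀ p : ℝ, p < Z p := by
    intro p
    obtain ⟨g, hg1, hg2⟩ := dense p a b hab
    have e : ∀ x, ρ g⁻¹ x = (ρ g).symm x := by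
      intro x
      rw [map_inv]
      rfl
    refine lt_of_lt_of_le ?_ (leZ p g⁻¹ ?_)
    · rw [e, OrderIso.lt_symm_apply]; exact hg2
    · rw [e, OrderIso.symm_apply_le]; exact hg1.le
  refine ⟨H1, H2, H3, H4, ?_, ?_⟩
  · intro g p
    have : (fun p => Z (ρ g p)) = fun p => ρ g (Z p) := by
      refine Continuous.ext_on (hmin a) (H3.comp (ρ g).continuous) ((ρ g).continuous.comp H3) ?_
      rintro _ ⟨h, rfl⟩
      have e : ∀ x, ρ g (ρ h x) = ρ (g * h) x := by
        intro x
        rw [map_mul]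
        rfl
      simp only [e, H1]
    exact congrFun this p
  · intro y x
    by_contra! hc
    have hm : Monotone fun n : ℕ => Z^[n] y := by
      refine monotone_nat_of_le_succ fun n => ?_
      rw [Function.iterate_succ_apply']
      exact (H4 _).le
    have hl := tendsto_atTop_ciSup hm ⟨x, by rintro _ ⟨n, rfl⟩; exact (hc n).le⟩
    have := isFixedPt_of_tendsto_iterate hl H3.continuousAt
    exact absurd this (H4 _).ne'
end

section
/- Let G be a group acting minimally on ℝ by orientation-preserving homeomorphisms, and suppose that for every nondegenerate compact interval I ⊆ ℝ there exists g ∈ G with g(I) ⊊ I (every interval can be taken properly inside itself). Then for any two nondegenerate compact intervals I, J ⊆ ℝ there exists g ∈ G with g(I) ⊆ J. -/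
/-- **Compressible case of the dichotomy.**

Let `G` act minimally on `ℝ` by orientation-preserving homeomorphisms, and suppose every
nondegenerate compact interval can be taken properly inside itself by some element of `G`.
Then any nondegenerate compact interval can be mapped inside any other by some element of `G`. -/
theorem compressible_action_transitive {G : Type*} [Group G] (ρ : G →* (ℝ ≃o ℝ))
    (hmin : ∀ x : ℝ, Dense (Set.range fun g : G => ρ g x))
    (hcomp : ∀ a b : ℝ, a < b → ∃ g : G, (ρ g) '' Set.Icc a b ⊂ Set.Icc a b) :
    ∀ a b c d : ℝ, a < b → c < d →
      ∃ g : G, (ρ g) '' Set.Icc a b ⊆ Set.Icc c d := by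
  intro a b c d hab hcd
  by_contra hno
  have hno' : ¬ ∃ g : G, c ≤ ρ g a ∧ ρ g b ≤ d := by
    rintro ⟨g, h1, h2⟩
    refine hno ⟨g, ?_⟩
    rintro _ ⟨x, hx, rfl⟩
    exact ⟨h1.trans ((ρ g).monotone hx.1), ((ρ g).monotone hx.2).trans h2⟩
  have hmeet : ∀ x u v : ℝ, u < v → ∃ g : G, u < ρ g x ∧ ρ g x < v := by
    intro x u v huv
    obtain ⟨_, ⟨g, rfl⟩, hg⟩ := (hmin x).exists_between huv
    exact ⟨g, hg.1, hg.2⟩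
  have hmul : ∀ (g h : G) (x : ℝ), ρ (g * h) x = ρ g (ρ h x) := by
    intro g h x
    rw [map_mul]; rfl
  have hinv : ∀ (g : G) (x : ℝ), ρ g⁻¹ (ρ g x) = x := by
    intro g x
    rw [← hmul]; simp
  have hinv' : ∀ (g : G) (x : ℝ), ρ g (ρ g⁻¹ x) = x := by
    intro g x
    rw [← hmul]; simp
  let S : ℝ → Set ℝ := fun x => {y | ∃ g : G, c ≤ ρ g x ∧ ρ g y ≤ d}
  have hSmono : ∀ x x', x ≤ x' → S x ⊆ S x' := by
    rintro x x' hxx y ⟨g, h1, h2⟩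
    exact ⟨g, h1.trans ((ρ g).monotone hxx), h2⟩
  have hSa : ∀ y ∈ S a, y ≤ b := by
    rintro y ⟨g, h1, h2⟩
    by_contra hy
    exact hno' ⟨g, h1, ((ρ g).monotone (le_of_lt (not_le.mp hy))).trans h2⟩
  have hSeq : ∀ (h : G) x y, y ∈ S x → ρ h y ∈ S (ρ h x) := by
    rintro h x y ⟨g, h1, h2⟩
    refine ⟨g * h⁻¹, ?_, ?_⟩
    · rw [hmul, hinv]; exact h1
    · rw [hmul, hinv]; exact h2
  have hbdd : ∀ x, BddAbove (S x) := by
    intro x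
    obtain ⟨h, -, hh⟩ := hmeet x (a - 1) a (by linarith)
    refine ⟨ρ h⁻¹ b, fun y hy => ?_⟩
    have := hSa _ (hSmono _ _ hh.le (hSeq h x y hy))
    have := (ρ h⁻¹).monotone this
    rwa [hinv] at this
  have hgt : ∀ x, ∃ y ∈ S x, x < y := by
    intro x
    obtain ⟨g, h1, h2⟩ := hmeet x c d hcd
    refine ⟨ρ g⁻¹ d, ⟨g, h1.le, (hinv' g d).le⟩, ?_⟩
    have := (ρ g⁻¹).strictMono h2
    rwa [hinv] at this
  have hne : ∀ x, (S x).Nonempty := fun x => (hgt x).imp fun _ h => h.1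
  let T : ℝ → ℝ := fun x => sSup (S x)
  have hTgt : ∀ x, x < T x := by
    intro x
    obtain ⟨y, hy, hxy⟩ := hgt x
    exact hxy.trans_le (le_csSup (hbdd x) hy)
  have hTmono : ∀ x x', x ≤ x' → T x ≤ T x' := fun x x' h =>
    csSup_le_csSup (hbdd x') (hne x) (hSmono x x' h)
  have hTle : ∀ (g : G) x, T (ρ g x) ≤ ρ g (T x) := by
    intro g x
    refine csSup_le (hne _) fun y hy => ?_
    have h1 := hSeq g⁻¹ _ _ hy
    rw [hinv] at h1
    have h2 := (ρ g).monotone (le_csSup (hbdd x) h1)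
    rwa [hinv'] at h2
  have hTeq : ∀ (g : G) x, T (ρ g x) = ρ g (T x) := by
    intro g x
    refine le_antisymm (hTle g x) ?_
    have h1 := hTle g⁻¹ (ρ g x)
    rw [hinv] at h1
    have h2 := (ρ g).monotone h1
    rwa [hinv'] at h2
  obtain ⟨g, hg⟩ := hcomp 0 (T 0) (hTgt 0)
  have hg0 : ρ g 0 ∈ Set.Icc 0 (T 0) := hg.1 ⟨0, ⟨le_rfl, (hTgt 0).le⟩, rfl⟩
  have hgT : ρ g (T 0) ∈ Set.Icc 0 (T 0) := hg.1 ⟨T 0, ⟨(hTgt 0).le, le_rfl⟩, rfl⟩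
  have hfix : T (ρ g 0) = T 0 :=
    le_antisymm ((hTeq g 0).le.trans hgT.2) (hTmono _ _ hg0.1)
  have hpos : 0 < ρ g 0 := by
    refine lt_of_le_of_ne hg0.1 fun h0 => hg.2 ?_
    intro y hy
    refine ⟨ρ g⁻¹ y, ⟨?_, ?_⟩, hinv' g y⟩
    · have := (ρ g⁻¹).monotone hy.1
      rw [h0, hinv] at this
      exact this
    · have := (ρ g⁻¹).monotone hy.2
      rwa [← hfix, hTeq, hinv] at this
  have hconst : ∀ z, 0 < z → z < ρ g 0 → T z = T 0 := fun z h1 h2 =>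
    le_antisymm ((hTmono _ _ h2.le).trans hfix.le) (hTmono _ _ h1.le)
  have hloc : IsLocallyConstant T := by
    rw [IsLocallyConstant.iff_eventually_eq]
    intro x
    obtain ⟨h, h1, h2⟩ := hmeet x 0 (ρ g 0) hpos
    have hc : Continuous (ρ h) := (ρ h).continuous
    filter_upwards [hc.continuousAt.eventually (Ioo_mem_nhds h1 h2)] with y hy
    apply (ρ h).injective
    rw [← hTeq, ← hTeq, hconst _ h1 h2, hconst _ hy.1 hy.2]
  have h1 := hTgt (T 0)
  rw [hloc.apply_eq_of_isPreconnected isPreconnected_univ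
    (Set.mem_univ (T 0)) (Set.mem_univ 0)] at h1
  exact lt_irrefl _ h1
end

section
/- Every homeomorphism Z : ℝ → ℝ satisfying Z(x) > x for all x ∈ ℝ is topologically conjugate to the unit translation: there exists a strictly increasing homeomorphism h : ℝ → ℝ such that h(Z(x)) = h(x) + 1 for all x ∈ ℝ. Consequently, any group of homeomorphisms of ℝ all of whose elements commute with Z is conjugate, by h, to a group of homeomorphisms of ℝ commuting with the translation x ↦ x + 1. -/
theorem orbit_strictMono (e : ℝ ≃o ℝ) (he : ∀ x : ℝ, x < e x) (x : ℝ) :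
    StrictMono (fun n : ℤ => (e ^ n) x) := by
  apply strictMono_int_of_lt_succ
  intro n
  have h : (e ^ (n + 1)) x = e ((e ^ n) x) := by
    rw [add_comm, zpow_add, zpow_one]; rfl
  simp only [h]
  exact he _

theorem orbit_succ (e : ℝ ≃o ℝ) (n : ℤ) (x : ℝ) : (e ^ (n + 1)) x = e ((e ^ n) x) := by
  rw [add_comm, zpow_add, zpow_one]; rfl

theorem orbit_succ' (e : ℝ ≃o ℝ) (n : ℤ) (x : ℝ) : (e ^ (n + 1)) x = (e ^ n) (e x) := by
  rw [zpow_add, zpow_one]; rfl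

theorem orbit_unbounded_above (e : ℝ ≃o ℝ) (he : ∀ x : ℝ, x < e x) (x : ℝ) :
    ∃ n : ℤ, x < (e ^ n) 0 := by
  by_contra! hc
  obtain ⟨L, hL⟩ : ∃ L, IsLUB (Set.range fun n : ℤ => (e ^ n) 0) L :=
    Real.exists_isLUB (Set.range_nonempty _) ⟨x, by rintro _ ⟨n, rfl⟩; exact hc n⟩
  have h1 : e.symm L < L := by simpa using he (e.symm L)
  obtain ⟨_, ⟨n, rfl⟩, h2, -⟩ := hL.exists_between h1
  have h3 : L < e ((e ^ n) 0) := by simpa using e.strictMono h2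
  rw [← orbit_succ] at h3
  exact absurd (hL.1 ⟨n + 1, rfl⟩) (not_le.2 h3)

theorem orbit_unbounded_below (e : ℝ ≃o ℝ) (he : ∀ x : ℝ, x < e x) (x : ℝ) :
    ∃ n : ℤ, (e ^ n) 0 < x := by
  by_contra! hc
  obtain ⟨L, hL⟩ : ∃ L, IsGLB (Set.range fun n : ℤ => (e ^ n) 0) L :=
    Real.exists_isGLB (Set.range_nonempty _) ⟨x, by rintro _ ⟨n, rfl⟩; exact hc n⟩
  obtain ⟨_, ⟨n, rfl⟩, -, h2⟩ := hL.exists_between (he L)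
  have h4 : (e ^ n) 0 = e ((e ^ (n - 1)) 0) := by rw [← orbit_succ]; simp
  simp only [h4] at h2
  exact absurd (hL.1 ⟨n - 1, rfl⟩) (not_le.2 (e.lt_iff_lt.1 h2))

theorem exists_conj (e : ℝ ≃o ℝ) (he : ∀ x : ℝ, x < e x) :
    ∃ g : ℝ ≃o ℝ, ∀ t, g (t + 1) = e (g t) := by
  have ha : 0 < e 0 := he 0
  let g : ℝ → ℝ := fun t => (e ^ ⌊t⌋) (e 0 * Int.fract t)
  have hmono : StrictMono g := by
    intro t s hts
    rcases (Int.floor_mono hts.le).eq_or_lt with h | h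
    · simp only [g, h]
      apply (e ^ ⌊s⌋).strictMono
      apply mul_lt_mul_of_pos_left _ ha
      simp only [Int.fract, h]
      linarith
    · calc g t < (e ^ ⌊t⌋) (e 0) := by
            apply (e ^ ⌊t⌋).strictMono
            nlinarith [Int.fract_lt_one t]
        _ = (e ^ (⌊t⌋ + 1)) 0 := (orbit_succ' e _ _).symm
        _ ≤ (e ^ ⌊s⌋) 0 := (orbit_strictMono e he 0).monotone (by omega)
        _ ≤ g s := by
            apply (e ^ ⌊s⌋).monotone
            exact mul_nonneg ha.le (Int.fract_nonneg s)
  have hsurj : Function.Surjective g := by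
    intro x
    obtain ⟨b, hb⟩ := orbit_unbounded_above e he x
    obtain ⟨c, hc⟩ := orbit_unbounded_below e he x
    obtain ⟨n, hn, hmax⟩ := Int.exists_greatest_of_bdd (P := fun n : ℤ => (e ^ n) 0 ≤ x)
      ⟨b, fun z hz => ((orbit_strictMono e he 0).lt_iff_lt.1 (lt_of_le_of_lt hz hb)).le⟩
      ⟨c, hc.le⟩
    have hn1 : x < (e ^ (n + 1)) 0 := by
      by_contra! h
      have := hmax _ h
      omega
    rw [orbit_succ'] at hn1
    obtain ⟨y, rfl⟩ := (e ^ n).surjective x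
    have hy0 : 0 ≤ y := (e ^ n).le_iff_le.1 hn
    have hy1 : y < e 0 := (e ^ n).lt_iff_lt.1 hn1
    have hd0 : 0 ≤ y / e 0 := by positivity
    have hd1 : y / e 0 < 1 := (div_lt_one ha).2 hy1
    have hf : ⌊(n : ℝ) + y / e 0⌋ = n := by
      rw [Int.floor_eq_iff]; constructor <;> linarith
    refine ⟨n + y / e 0, ?_⟩
    have h5 : e 0 * Int.fract ((n : ℝ) + y / e 0) = y := by
      rw [Int.fract, hf]; field_simp; ring
    simp only [g, hf, h5]
  refine ⟨hmono.orderIsoOfSurjective g hsurj, fun t => ?_⟩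
  change g (t + 1) = e (g t)
  simp only [g, Int.floor_add_one, Int.fract_add_one, orbit_succ]


/-- **Fixed-point-free homeomorphisms of ℝ are conjugate to the unit translation.**

If `Z` is a homeomorphism of `ℝ` with `Z x > x` for all `x`, then there is a strictly
increasing homeomorphism `h` of `ℝ` with `h (Z x) = h x + 1` for all `x`.  Consequently any
homeomorphism `f` of `ℝ` commuting with `Z` is conjugated by `h` to a homeomorphism of `ℝ`
commuting with the translation `x ↦ x + 1`. -/
theorem conjugate_to_unit_translation (Z : ℝ ≃ₜ ℝ) (hZ : ∀ x : ℝ, x < Z x) :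
    ∃ h : ℝ ≃o ℝ, (∀ x : ℝ, h (Z x) = h x + 1) ∧
      ∀ f : ℝ ≃ₜ ℝ, (∀ x : ℝ, f (Z x) = Z (f x)) →
        ∀ x : ℝ, h (f (h.symm (x + 1))) = h (f (h.symm x)) + 1 := by
  have hmono : StrictMono Z := by
    rcases Z.continuous.strictMono_of_inj Z.injective with h | h
    · exact h
    · exact absurd (h (hZ 0)) (not_lt.2 (hZ _).le)
  obtain ⟨g, hg⟩ := exists_conj (hmono.orderIsoOfSurjective Z Z.surjective) hZ
  have hg' : ∀ t, g (t + 1) = Z (g t) := hg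
  have key : ∀ x, g.symm (Z x) = g.symm x + 1 := by
    intro x
    rw [OrderIso.symm_apply_eq, hg', OrderIso.apply_symm_apply]
  refine ⟨g.symm, key, fun f hf x => ?_⟩
  rw [OrderIso.symm_symm, hg', hf, key]
end

section
/- Let A ⊆ S¹ and let f : A → S¹ be a map whose image f(A) is dense in S¹ and which weakly preserves circular order: for every positively ordered triple (x,y,z) of points of A, the triple (f(x),f(y),f(z)) is not negatively ordered. Then f admits a unique extension to a monotone map φ : S¹ → S¹ with φ(a) = f(a) for all a ∈ A. -/
/-- The circle, modelled as `ℝ/ℤ`. -/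
abbrev 𝕊 : Type := AddCircle (1 : ℝ)

/-- A triple `(x, y, z)` of points of the circle is *positively ordered* if the three points
are distinct and `y` lies in the open counterclockwise arc from `x` to `z`:  there are lifts
`a < b < c < a + 1` of `x`, `y`, `z` respectively. -/
def PosOrdered (x y z : 𝕊) : Prop :=
  ∃ a b c : ℝ, a < b ∧ b < c ∧ c < a + 1 ∧ x = (a : 𝕊) ∧ y = (b : 𝕊) ∧ z = (c : 𝕊)

/-- A triple `(x, y, z)` is *negatively ordered* if `y` lies in the open counterclockwise
arc from `z` to `x`. -/
def NegOrdered (x y z : 𝕊) : Prop := PosOrdered z y x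

/-- A *monotone map* of the circle: a continuous map of degree one (it admits a continuous
lift `F : ℝ → ℝ` with `F (x + 1) = F x + 1`) which does not reverse the circular order:
the image of a positively ordered triple is never negatively ordered. -/
def IsMonotoneCircleMap (φ : 𝕊 → 𝕊) : Prop :=
  Continuous φ ∧
  (∃ F : ℝ → ℝ, Continuous F ∧ (∀ x : ℝ, F (x + 1) = F x + 1) ∧
      ∀ x : ℝ, φ (x : 𝕊) = ((F x : ℝ) : 𝕊)) ∧
  ∀ x y z : 𝕊, PosOrdered x y z → ¬ NegOrdered (φ x) (φ y) (φ z)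

/-- The pair `{x, y}` of distinct points *links* the pair `{z, w}` of distinct points if
`z` and `w` lie in different connected components of `𝕊 \ {x, y}`. -/
def Links (x y z w : 𝕊) : Prop :=
  z ∈ ({x, y}ᶜ : Set 𝕊) ∧ w ∈ ({x, y}ᶜ : Set 𝕊) ∧
    connectedComponentIn ({x, y}ᶜ : Set 𝕊) z ≠ connectedComponentIn ({x, y}ᶜ : Set 𝕊) w

/-- The complement of the diagonal in `𝕊 × 𝕊`. -/
def OffDiagonal : Set (𝕊 × 𝕊) := {p | p.1 ≠ p.2}

/-- A *laminar relation* on the circle: a symmetric subset of `𝕊 × 𝕊` minus the diagonal,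
closed as a subset of `𝕊 × 𝕊` minus the diagonal, such that no two of its pairs link
each other. -/
def IsLaminar (R : Set (𝕊 × 𝕊)) : Prop :=
  R ⊆ OffDiagonal ∧
  (∀ x y : 𝕊, (x, y) ∈ R → (y, x) ∈ R) ∧
  closure R ∩ OffDiagonal ⊆ R ∧
  ∀ x y z w : 𝕊, (x, y) ∈ R → (z, w) ∈ R → ¬ Links x y z w

lemma circ_eq_iff (a b : ℝ) : (a : 𝕊) = (b : 𝕊) ↔ ∃ n : ℤ, b = a + n := by
  rw [eq_comm, ← sub_eq_zero, ← AddCircle.coe_sub, AddCircle.coe_eq_zero_iff]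
  constructor
  · rintro ⟨n, hn⟩
    exact ⟨n, by simp at hn; linarith⟩
  · rintro ⟨n, hn⟩
    exact ⟨n, by simp; linarith⟩

lemma circ_add_int (a : ℝ) (n : ℤ) : ((a + n : ℝ) : 𝕊) = (a : 𝕊) :=
  ((circ_eq_iff _ _).2 ⟨n, rfl⟩).symm

lemma not_pos_of_le {u v w : ℝ} (h1 : u ≤ v) (h2 : v ≤ w) (h3 : w ≤ u + 1) :
    ¬ PosOrdered (w : 𝕊) (v : 𝕊) (u : 𝕊) := by
  rintro ⟨p, q, r, hpq, hqr, hrp, hw, hv, hu⟩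
  obtain ⟨i, rfl⟩ := (circ_eq_iff _ _).1 hw
  obtain ⟨j, rfl⟩ := (circ_eq_iff _ _).1 hv
  obtain ⟨k, rfl⟩ := (circ_eq_iff _ _).1 hu
  have a1 : (i : ℝ) < j := by linarith
  have a2 : (j : ℝ) < k := by linarith
  have a3 : (k : ℝ) < i + 2 := by linarith
  have b1 : i < j := by exact_mod_cast a1
  have b2 : j < k := by exact_mod_cast a2
  have b3 : k < i + 2 := by exact_mod_cast a3
  omega

lemma shift_int {F : ℝ → ℝ} (hF : ∀ x, F (x + 1) = F x + 1) (x : ℝ) (n : ℤ) :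
    F (x + n) = F x + n := by
  induction n using Int.induction_on with
  | zero => simp
  | succ k ih =>
    have := hF (x + k)
    push_cast at *
    rw [← add_assoc, this, ih, add_assoc]
  | pred k ih =>
    have := hF (x + (-k - 1))
    push_cast at *
    have e : x + (-(k : ℝ) - 1) + 1 = x + -k := by ring
    rw [e, ih] at this
    linarith

lemma lift_mono {φ : 𝕊 → 𝕊} {F : ℝ → ℝ} (hc : Continuous F)
    (hF : ∀ x, F (x + 1) = F x + 1) (hφ : ∀ x : ℝ, φ (x : 𝕊) = ((F x : ℝ) : 𝕊))
    (hm : ∀ x y z : 𝕊, PosOrdered x y z → ¬ NegOrdered (φ x) (φ y) (φ z)) : Monotone F := by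
  -- close points first
  have key : ∀ x y : ℝ, x < y → y < x + 1 → F x - 1 < F y → F y < F x → False := by
    intro x y hxy hyx h1 h2
    obtain ⟨m, hm1, hm2⟩ : ∃ m, F x < m ∧ m < F y + 1 := exists_between (by linarith)
    obtain ⟨z, ⟨hz1, hz2⟩, rfl⟩ : m ∈ F '' Set.Ioo y (x + 1) := by
      apply intermediate_value_Ioo hyx.le hc.continuousOn
      rw [hF]
      exact ⟨by linarith, by linarith⟩
    refine hm x y z ⟨x, y, z, hxy, hz1, hz2, rfl, rfl, rfl⟩ ?_
    refine ⟨F z - 1, F y, F x, by linarith, h2, by linarith, ?_, hφ y, hφ x⟩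
    rw [hφ, circ_eq_iff]
    exact ⟨-1, by push_cast; ring⟩
  have key2 : ∀ x y : ℝ, x < y → y < x + 1 → F x ≤ F y := by
    intro x y hxy hyx
    by_contra! h
    obtain ⟨m, hm1, hm2⟩ : ∃ m, max (F x - 1) (F y) < m ∧ m < F x :=
      exists_between (max_lt (by linarith) h)
    obtain ⟨z, ⟨hz1, hz2⟩, rfl⟩ : m ∈ F '' Set.Ioo x y := by
      apply intermediate_value_Ioo' hxy.le hc.continuousOn
      exact ⟨(le_max_right _ _).trans_lt hm1, hm2⟩
    exact key x z hz1 (by linarith) ((le_max_left _ _).trans_lt hm1) hm2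
  intro x y hxy
  have e := shift_int hF (y - ⌊y - x⌋) ⌊y - x⌋
  have f0 : (0 : ℝ) ≤ ⌊y - x⌋ := by exact_mod_cast Int.floor_nonneg.2 (by linarith)
  have f1 := Int.floor_le (y - x)
  have f2 := Int.lt_floor_add_one (y - x)
  rw [sub_add_cancel] at e
  rw [e]
  rcases (show x ≤ y - ⌊y - x⌋ by linarith).eq_or_lt with h | h
  · rw [← h]; linarith
  · have := key2 _ _ h (by linarith)
    linarith

/-- The relation `t` is the correct lifted value at `s`. -/
def LiftRel (A : Set 𝕊) (f : 𝕊 → 𝕊) (α β s t : ℝ) : Prop :=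
  ((α + s : ℝ) : 𝕊) ∈ A ∧ f ((α + s : ℝ) : 𝕊) = ((β + t : ℝ) : 𝕊) ∧ ⌊s⌋ = ⌊t⌋ ∧
    (t = ⌊t⌋ → s = ⌊s⌋)

section
variable {A : Set 𝕊} {f : 𝕊 → 𝕊} {α β : ℝ}

lemma LiftRel.int (hα : (α : 𝕊) ∈ A) (hβ : f (α : 𝕊) = (β : 𝕊)) (n : ℤ) :
    LiftRel A f α β n n := by
  refine ⟨?_, ?_, rfl, by simp⟩
  · rwa [circ_add_int]
  · rw [circ_add_int, circ_add_int, hβ]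

lemma LiftRel.shift {s t : ℝ} (h : LiftRel A f α β s t) (n : ℤ) :
    LiftRel A f α β (s + n) (t + n) := by
  obtain ⟨h1, h2, h3, h4⟩ := h
  refine ⟨?_, ?_, ?_, ?_⟩
  · rwa [← add_assoc, circ_add_int]
  · rwa [← add_assoc, circ_add_int, ← add_assoc, circ_add_int]
  · simp [h3]
  · simpa using h4

/-- Every lifted value is attained. -/
lemma LiftRel.exists_of (hα : (α : 𝕊) ∈ A) (hβ : f (α : 𝕊) = (β : 𝕊)) {t : ℝ}
    (ht : ((β + t : ℝ) : 𝕊) ∈ f '' A) : ∃ s, LiftRel A f α β s t := by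
  by_cases hi : t = ⌊t⌋
  · rw [hi]
    exact ⟨_, LiftRel.int hα hβ _⟩
  · obtain ⟨a, ha, hat⟩ := ht
    obtain ⟨a, rfl⟩ := QuotientAddGroup.mk_surjective a
    have e : ((α + (a - α - ⌊a - α⌋ + ⌊t⌋) : ℝ) : 𝕊) = (a : 𝕊) := by
      rw [circ_eq_iff]
      exact ⟨⌊a - α⌋ - ⌊t⌋, by push_cast; ring⟩
    refine ⟨a - α - ⌊a - α⌋ + ⌊t⌋, ?_, ?_, ?_, fun h => absurd h hi⟩
    · rw [e]; exact ha
    · rw [e]; exact hat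
    · simp

lemma dense_lift (hdense : Dense (f '' A)) (β : ℝ) :
    Dense {t : ℝ | ((β + t : ℝ) : 𝕊) ∈ f '' A} := by
  have h1 : Dense ((fun x : ℝ => (x : 𝕊)) ⁻¹' (f '' A)) :=
    hdense.preimage QuotientAddGroup.isOpenMap_coe
  exact h1.preimage (isOpenMap_add_left β)

/-- Any normalised monotone lift realises the relation. -/
lemma LiftRel.eq_of_mono {F : ℝ → ℝ} (hm : Monotone F) (hn : ∀ n : ℤ, F n = n)
    (hφ : ∀ s : ℝ, ((α + s : ℝ) : 𝕊) ∈ A → f ((α + s : ℝ) : 𝕊) = ((β + F s : ℝ) : 𝕊))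
    {s t : ℝ} (h : LiftRel A f α β s t) : F s = t := by
  obtain ⟨h1, h2, h3, h4⟩ := h
  by_cases hi : t = ⌊t⌋
  · rw [h4 hi, hn, h3, ← hi]
  · have e := hφ s h1
    rw [h2, circ_eq_iff] at e
    obtain ⟨k, hk⟩ := e
    have l1 := hm (Int.floor_le s)
    have l2 := hm (Int.lt_floor_add_one s).le
    have l3 := hn (⌊s⌋ + 1)
    push_cast at l3
    rw [l3] at l2
    rw [hn] at l1
    rw [h3] at l1 l2
    have g1 := lt_of_le_of_ne (Int.floor_le t) (Ne.symm hi)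
    have g2 := Int.lt_floor_add_one t
    have k1 : (k : ℝ) < 1 := by linarith
    have k2 : (-1 : ℝ) < k := by linarith
    have k1' : k < 1 := by exact_mod_cast k1
    have k2' : -1 < k := by exact_mod_cast k2
    have : k = 0 := by omega
    subst this
    simp at hk
    linarith

lemma unique_lift (hdense : Dense (f '' A)) (hα : (α : 𝕊) ∈ A) (hβ : f (α : 𝕊) = (β : 𝕊))
    {F G : ℝ → ℝ} (hF : Monotone F) (hG : Monotone G)
    (hFn : ∀ n : ℤ, F n = n) (hGn : ∀ n : ℤ, G n = n)
    (hFφ : ∀ s : ℝ, ((α + s : ℝ) : 𝕊) ∈ A → f ((α + s : ℝ) : 𝕊) = ((β + F s : ℝ) : 𝕊))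
    (hGφ : ∀ s : ℝ, ((α + s : ℝ) : 𝕊) ∈ A → f ((α + s : ℝ) : 𝕊) = ((β + G s : ℝ) : 𝕊))
    (x : ℝ) : F x ≤ G x := by
  by_contra! h
  obtain ⟨t, ht, h1, h2⟩ := (dense_lift hdense β).exists_between h
  obtain ⟨s, hs⟩ := LiftRel.exists_of hα hβ ht
  have e1 := hs.eq_of_mono hF hFn hFφ
  have e2 := hs.eq_of_mono hG hGn hGφ
  have c1 : s < x := hF.reflect_lt (by linarith)
  have c2 : x < s := hG.reflect_lt (by linarith)
  exact lt_asymm c1 c2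

/-- normalised lift of an extension -/
lemma exists_norm_lift (hβ : f (α : 𝕊) = (β : 𝕊)) (hα : (α : 𝕊) ∈ A) {φ : 𝕊 → 𝕊}
    (hφ : IsMonotoneCircleMap φ) (he : ∀ a ∈ A, φ a = f a) :
    ∃ F : ℝ → ℝ, Monotone F ∧ (∀ n : ℤ, F n = n) ∧
      ∀ s : ℝ, φ ((α + s : ℝ) : 𝕊) = ((β + F s : ℝ) : 𝕊) := by
  obtain ⟨-, ⟨F, hc, hF, hl⟩, hm⟩ := hφ
  have hmono := lift_mono hc hF hl hm
  have e := he _ hα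
  rw [hl, hβ, circ_eq_iff] at e
  obtain ⟨k, hk⟩ := e
  refine ⟨fun s => F (α + s) + k - β, ?_, ?_, ?_⟩
  · intro x y hxy
    have := hmono (show α + x ≤ α + y by linarith)
    simp only
    linarith
  · intro n
    simp only [shift_int hF]
    linarith
  · intro s
    rw [hl, circ_eq_iff]
    exact ⟨k, by ring⟩

lemma LiftRel.mono
    (hord : ∀ x ∈ A, ∀ y ∈ A, ∀ z ∈ A,
      PosOrdered x y z → ¬ NegOrdered (f x) (f y) (f z))
    (hα : (α : 𝕊) ∈ A) (hβ : f (α : 𝕊) = (β : 𝕊))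
    {s t s' t' : ℝ} (h : LiftRel A f α β s t) (h' : LiftRel A f α β s' t') (hs : s ≤ s') :
    t ≤ t' := by
  by_contra! hlt
  obtain ⟨h1, h2, h3, h4⟩ := h
  obtain ⟨h1', h2', h3', h4'⟩ := h'
  have hfl : ⌊t⌋ = ⌊t'⌋ := by
    apply le_antisymm
    · rw [← h3, ← h3']; exact Int.floor_le_floor hs
    · exact Int.floor_le_floor hlt.le
  have a1 := Int.floor_le t
  have a2 := Int.lt_floor_add_one t
  have a1' := Int.floor_le t'
  have a2' := Int.lt_floor_add_one t'
  have b1 := Int.floor_le s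
  have b2 := Int.lt_floor_add_one s
  have b1' := Int.floor_le s'
  have b2' := Int.lt_floor_add_one s'
  rw [h3] at b1 b2
  rw [h3'] at b1' b2'
  rw [hfl] at a1 a2 b1 b2
  have diff : ∀ {u v : ℝ}, ((β + u : ℝ) : 𝕊) = ((β + v : ℝ) : 𝕊) → u < v → v < u + 1 → False := by
    intro u v huv h5 h6
    rw [circ_eq_iff] at huv
    obtain ⟨k, hk⟩ := huv
    have k1 : (k : ℝ) < 1 := by linarith
    have k2 : (0 : ℝ) < k := by linarith
    have k1' : k < 1 := by exact_mod_cast k1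
    have k2' : 0 < k := by exact_mod_cast k2
    omega
  rcases hs.eq_or_lt with rfl | hss
  · rw [h2] at h2'
    exact diff h2'.symm hlt (by linarith)
  · have b0 : (⌊t'⌋ : ℝ) < s := by
      refine lt_of_le_of_ne b1 fun hh => ?_
      rw [← hh, circ_add_int, hβ] at h2
      refine diff (u := ⌊t'⌋) (v := t) ?_ (by linarith) (by linarith)
      rw [← h2, circ_add_int]
    have c0 : (⌊t'⌋ : ℝ) < t' := by
      refine lt_of_le_of_ne a1' fun hh => ?_
      have := h4' hh.symm
      rw [h3'] at this
      linarith
    refine hord _ hα _ h1 _ h1' ⟨α + ⌊t'⌋, α + s, α + s', by linarith, by linarith, by linarith,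
      (circ_add_int _ _).symm, rfl, rfl⟩ ?_
    refine ⟨β + t', β + t, β + (⌊t'⌋ + 1 : ℤ), by linarith, by push_cast; linarith,
      by push_cast; linarith, h2', h2, ?_⟩
    rw [hβ, circ_add_int]

lemma exists_lift (hdense : Dense (f '' A))
    (hord : ∀ x ∈ A, ∀ y ∈ A, ∀ z ∈ A,
      PosOrdered x y z → ¬ NegOrdered (f x) (f y) (f z))
    (hα : (α : 𝕊) ∈ A) (hβ : f (α : 𝕊) = (β : 𝕊)) :
    ∃ F : ℝ → ℝ, Monotone F ∧ Continuous F ∧ (∀ x, F (x + 1) = F x + 1) ∧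
      ∀ s : ℝ, ((α + s : ℝ) : 𝕊) ∈ A → f ((α + s : ℝ) : 𝕊) = ((β + F s : ℝ) : 𝕊) := by
  set S : ℝ → Set ℝ := fun x => {t | ∃ s ≤ x, LiftRel A f α β s t} with hS
  have hne : ∀ x, (S x).Nonempty := fun x => ⟨⌊x⌋, ⌊x⌋, Int.floor_le x, LiftRel.int hα hβ _⟩
  have hub : ∀ x, ∀ t ∈ S x, t ≤ ⌊x⌋ + 1 := by
    rintro x t ⟨s, hs, h⟩
    have := h.2.2.1
    have h2 := Int.floor_le_floor hs
    rw [this] at h2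
    have h3 : (⌊t⌋ : ℝ) ≤ ⌊x⌋ := by exact_mod_cast h2
    linarith [Int.lt_floor_add_one t]
  have hbd : ∀ x, BddAbove (S x) := fun x => ⟨_, hub x⟩
  set F : ℝ → ℝ := fun x => sSup (S x) with hFdef
  have hFm : Monotone F := by
    intro x y hxy
    apply csSup_le_csSup (hbd y) (hne x)
    rintro t ⟨s, hs, h⟩
    exact ⟨s, hs.trans hxy, h⟩
  have hFR : ∀ s t, LiftRel A f α β s t → F s = t := by
    intro s t h
    apply le_antisymm
    · apply csSup_le (hne s)
      rintro t' ⟨s', hs', h'⟩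
      exact h'.mono hord hα hβ h hs'
    · exact le_csSup (hbd s) ⟨s, le_rfl, h⟩
  have hFn : ∀ n : ℤ, F n = n := fun n => hFR _ _ (LiftRel.int hα hβ n)
  have hD := dense_lift hdense β
  have hFc : Continuous F := by
    apply hFm.continuous_of_denseRange
    apply hD.mono
    intro t ht
    obtain ⟨s, hs⟩ := LiftRel.exists_of hα hβ ht
    exact ⟨s, hFR _ _ hs⟩
  have hF1 : ∀ x, F (x + 1) = F x + 1 := by
    intro x
    apply le_antisymm
    · apply csSup_le (hne _)
      rintro t ⟨s, hs, h⟩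
      have h' := h.shift (-1)
      push_cast at h'
      have : t + -1 ≤ F x := le_csSup (hbd x) ⟨_, by linarith, h'⟩
      linarith
    · have : F x ≤ F (x + 1) - 1 := by
        apply csSup_le (hne _)
        rintro t ⟨s, hs, h⟩
        have h' := h.shift 1
        push_cast at h'
        have : t + 1 ≤ F (x + 1) := le_csSup (hbd _) ⟨_, by linarith, h'⟩
        linarith
      linarith
  refine ⟨F, hFm, hFc, hF1, ?_⟩
  intro s hs
  obtain ⟨r, hr⟩ := QuotientAddGroup.mk_surjective (f ((α + s : ℝ) : 𝕊))
  have hr' : f ((α + s : ℝ) : 𝕊) = (r : 𝕊) := hr.symm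
  -- the lifted value with the same integer part as `s`
  set t : ℝ := r - β - ⌊r - β⌋ + ⌊s⌋ with ht
  have het : f ((α + s : ℝ) : 𝕊) = ((β + t : ℝ) : 𝕊) := by
    rw [hr', circ_eq_iff]
    exact ⟨⌊s⌋ - ⌊r - β⌋, by push_cast; ring⟩
  have hft : ⌊s⌋ = ⌊t⌋ := by simp [ht]
  by_cases hR : t = ⌊t⌋ → s = ⌊s⌋
  · rw [hFR s t ⟨hs, het, hft, hR⟩, het]
  · push Not at hR
    obtain ⟨hti, hsi⟩ := hR
    rw [← hft] at hti
    have b1 := lt_of_le_of_ne (Int.floor_le s) (Ne.symm hsi)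
    have b2 := Int.lt_floor_add_one s
    have l1 := hFm b1.le
    have l2 := hFm b2.le
    rw [hF1, hFn] at l2
    rw [hFn] at l1
    have hft0 : f ((α + s : ℝ) : 𝕊) = (β : 𝕊) := by
      rw [het, hti, circ_add_int]
    rcases l1.eq_or_lt with h | l1
    · rw [hft0, ← h, circ_add_int]
    rcases l2.eq_or_lt with h | l2
    · rw [hft0, h, circ_eq_iff]
      exact ⟨⌊s⌋ + 1, by push_cast; ring⟩
    exfalso
    obtain ⟨t1, ht1, c1, c2⟩ := hD.exists_between l1
    obtain ⟨t2, ht2, d1, d2⟩ := hD.exists_between l2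
    obtain ⟨s1, hs1⟩ := LiftRel.exists_of hα hβ ht1
    obtain ⟨s2, hs2⟩ := LiftRel.exists_of hα hβ ht2
    have e1 := hFR _ _ hs1
    have e2 := hFR _ _ hs2
    have g1 : s1 < s := hFm.reflect_lt (by linarith)
    have g2 : s < s2 := hFm.reflect_lt (by linarith)
    have g3 : (⌊s⌋ : ℝ) < s1 := hFm.reflect_lt (by rw [hFn]; linarith)
    have g4 : s2 < ⌊s⌋ + 1 := hFm.reflect_lt (by rw [hF1, hFn]; linarith)
    refine hord _ hs1.1 _ hs _ hs2.1 ⟨α + s1, α + s, α + s2, by linarith, by linarith,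
      by linarith, rfl, rfl, rfl⟩ ?_
    refine ⟨β + t2, β + (⌊s⌋ + 1 : ℤ), β + t1 + (1 : ℤ), by push_cast; linarith,
      by push_cast; linarith, by push_cast; linarith, hs2.2.1, ?_, ?_⟩
    · rw [hft0, circ_add_int]
    · rw [hs1.2.1, circ_add_int]

end

theorem unique_monotone_extension (A : Set 𝕊) (f : 𝕊 → 𝕊)
    (hdense : Dense (f '' A))
    (hord : ∀ x ∈ A, ∀ y ∈ A, ∀ z ∈ A,
      PosOrdered x y z → ¬ NegOrdered (f x) (f y) (f z)) :
    ∃! φ : 𝕊 → 𝕊, IsMonotoneCircleMap φ ∧ ∀ a ∈ A, φ a = f a := by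
  obtain ⟨_, a, hα, -⟩ := hdense.nonempty
  obtain ⟨α, rfl⟩ := QuotientAddGroup.mk_surjective a
  obtain ⟨β, hβ⟩ := QuotientAddGroup.mk_surjective (f (α : 𝕊))
  replace hβ : f (α : 𝕊) = (β : 𝕊) := hβ.symm
  replace hα : (α : 𝕊) ∈ A := hα
  apply existsUnique_of_exists_of_unique
  · obtain ⟨F, hFm, hFc, hF1, hFA⟩ := exists_lift hdense hord hα hβ
    set G : ℝ → ℝ := fun x => β + F (x - α) with hG
    have hGm : Monotone G := by
      intro x y hxy
      have := hFm (show x - α ≤ y - α by linarith)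
      simp only [hG]
      linarith
    have hGc : Continuous G := by fun_prop
    have hG1 : ∀ x, G (x + 1) = G x + 1 := by
      intro x
      have := hF1 (x - α)
      simp only [hG]
      rw [show x + 1 - α = x - α + 1 by ring, this]
      ring
    have hper : Function.Periodic (fun x : ℝ => ((G x : ℝ) : 𝕊)) 1 := by
      intro x
      simp only [hG1]
      simp
    have hlift : ∀ x : ℝ, hper.lift (x : 𝕊) = ((G x : ℝ) : 𝕊) := fun x => hper.lift_coe x
    refine ⟨hper.lift, ⟨?_, ⟨G, hGc, hG1, hlift⟩, ?_⟩, ?_⟩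
    · apply (QuotientAddGroup.isQuotientMap_mk _).continuous_iff.2
      exact (AddCircle.continuous_mk' 1).comp hGc
    · rintro x y z ⟨a, b, c, hab, hbc, hca, rfl, rfl, rfl⟩
      rw [hlift, hlift, hlift]
      refine not_pos_of_le (hGm hab.le) (hGm hbc.le) ?_
      rw [← hG1]
      exact hGm hca.le
    · intro a ha
      obtain ⟨a, rfl⟩ := QuotientAddGroup.mk_surjective a
      have := hFA (a - α) (by rw [add_sub_cancel]; exact ha)
      rw [add_sub_cancel] at this
      exact (hlift a).trans this.symm
  · rintro φ ψ ⟨hφ, hφA⟩ ⟨hψ, hψA⟩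
    obtain ⟨F, hF, hFn, hFl⟩ := exists_norm_lift hβ hα hφ hφA
    obtain ⟨G, hG, hGn, hGl⟩ := exists_norm_lift hβ hα hψ hψA
    have hFf := fun s hs => (hφA _ hs).symm.trans (hFl s)
    have hGf := fun s hs => (hψA _ hs).symm.trans (hGl s)
    funext x
    obtain ⟨x, rfl⟩ := QuotientAddGroup.mk_surjective x
    have e : F (x - α) = G (x - α) :=
      le_antisymm (unique_lift hdense hα hβ hF hG hFn hGn hFf hGf _)
        (unique_lift hdense hα hβ hG hF hGn hFn hGf hFf _)
    have h1 := hFl (x - α)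
    have h2 := hGl (x - α)
    rw [add_sub_cancel] at h1 h2
    rw [e] at h1
    exact h1.trans h2.symm
end

section
/- Let R be a laminar relation on S¹ and let φ : S¹ → S¹ be a monotone map. Then the set φ(R) := {(φ(x), φ(y)) : (x,y) ∈ R, φ(x) ≠ φ(y)} is again a laminar relation on S¹: it is symmetric, closed in S¹ × S¹ minus the diagonal, and unlinked. -/
theorem exists_lift_s6 (a : ℝ) (p : 𝕊) (hp : p ≠ (a : 𝕊)) :
    ∃ b : ℝ, a < b ∧ b < a + 1 ∧ p = (b : 𝕊) := by
  have : Fact ((0 : ℝ) < 1) := ⟨one_pos⟩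
  obtain ⟨c, hc, h⟩ : p ∈ (fun t : ℝ => (t : 𝕊)) '' Set.Ico a (a + 1) := by
    rw [AddCircle.coe_image_Ico_eq]; trivial
  refine ⟨c, lt_of_le_of_ne hc.1 ?_, hc.2, h.symm⟩
  rintro rfl
  exact hp h.symm

theorem coe_eq_imp {a b : ℝ} (h : (a : 𝕊) = (b : 𝕊)) : ∃ n : ℤ, b = a + n := by
  rw [eq_comm, ← sub_eq_zero, ← AddCircle.coe_sub, AddCircle.coe_eq_zero_iff] at h
  obtain ⟨n, hn⟩ := h
  refine ⟨n, ?_⟩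
  simp at hn
  linarith

theorem coe_inj_of {a b : ℝ} (h : (a : 𝕊) = (b : 𝕊)) (h1 : a < b + 1) (h2 : b < a + 1) :
    a = b := by
  obtain ⟨n, rfl⟩ := coe_eq_imp h
  have h3 : (n : ℝ) < 1 := by linarith
  have h4 : (-1 : ℝ) < n := by linarith
  have h5 : n < 1 := by exact_mod_cast h3
  have h6 : -1 < n := by exact_mod_cast h4
  have : n = 0 := by omega
  simp [this]

theorem coe_add_one (a : ℝ) : ((a + 1 : ℝ) : 𝕊) = (a : 𝕊) := by
  rw [AddCircle.coe_add, AddCircle.coe_period, add_zero]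

theorem pos_cycle {x y z : 𝕊} (h : PosOrdered x y z) : PosOrdered y z x := by
  obtain ⟨a, b, c, h1, h2, h3, rfl, rfl, rfl⟩ := h
  exact ⟨b, c, a + 1, h2, h3, by linarith, rfl, rfl, (coe_add_one a).symm⟩

theorem pos_total {x y z : 𝕊} (hxy : x ≠ y) (hxz : x ≠ z) (hyz : y ≠ z) :
    PosOrdered x y z ∨ PosOrdered x z y := by
  obtain ⟨a, rfl⟩ := QuotientAddGroup.mk_surjective x
  obtain ⟨b, h1, h2, rfl⟩ := exists_lift_s6 a y hxy.symm
  obtain ⟨c, h3, h4, rfl⟩ := exists_lift_s6 a z hxz.symm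
  rcases lt_trichotomy b c with h | h | h
  · exact Or.inl ⟨a, b, c, h1, h, h4, rfl, rfl, rfl⟩
  · exact absurd (by rw [h]) hyz
  · exact Or.inr ⟨a, c, b, h3, h, h2, rfl, rfl, rfl⟩

/-- Monotone maps reflect the circular order. -/
theorem pos_reflect {φ : 𝕊 → 𝕊} (hφ : IsMonotoneCircleMap φ) {x y z : 𝕊}
    (h : PosOrdered (φ x) (φ y) (φ z)) (hxy : φ x ≠ φ y) (hxz : φ x ≠ φ z) (hyz : φ y ≠ φ z) :
    PosOrdered x y z := by
  rcases pos_total (x := x) (y := y) (z := z) (fun e => hxy (by rw [e]))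
    (fun e => hxz (by rw [e])) (fun e => hyz (by rw [e])) with h' | h'
  · exact h'
  · exact absurd (pos_cycle h) (hφ.2.2 _ _ _ h')

theorem same_comp {x y z w : 𝕊} (hz : PosOrdered x z y) (hw : PosOrdered x w y) :
    connectedComponentIn ({x, y}ᶜ : Set 𝕊) z = connectedComponentIn ({x, y}ᶜ : Set 𝕊) w := by
  obtain ⟨a, b, c, h1, h2, h3, rfl, rfl, rfl⟩ := hz
  obtain ⟨a', b', c', h1', h2', h3', ha, rfl, hc⟩ := hw
  obtain ⟨n, rfl⟩ := coe_eq_imp ha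
  have hcc : c = c' - n := by
    apply coe_inj_of
    · rw [AddCircle.coe_sub, hc]
      have : ((n : ℝ) : 𝕊) = 0 := by
        rw [AddCircle.coe_eq_zero_iff]; exact ⟨n, by simp⟩
      rw [this, sub_zero]
    · linarith
    · linarith
  have hconn : IsPreconnected ((fun t : ℝ => (t : 𝕊)) '' Set.Ioo a c) :=
    isPreconnected_Ioo.image _ (AddCircle.continuous_mk' (1:ℝ)).continuousOn
  have hsub : ((fun t : ℝ => (t : 𝕊)) '' Set.Ioo a c) ⊆ ({(a : 𝕊), (c : 𝕊)}ᶜ : Set 𝕊) := by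
    rintro _ ⟨t, ⟨ht1, ht2⟩, rfl⟩ (h | h)
    · have := coe_inj_of (a := t) (b := a) h (by linarith) (by linarith)
      linarith
    · have := coe_inj_of (a := t) (b := c) h (by linarith) (by linarith)
      linarith
  apply connectedComponentIn_eq
  refine hconn.subset_connectedComponentIn ⟨b, ⟨h1, h2⟩, rfl⟩ hsub ⟨b' - n, ⟨by linarith, by linarith⟩, ?_⟩
  have : ((n : ℝ) : 𝕊) = 0 := by
    rw [AddCircle.coe_eq_zero_iff]; exact ⟨n, by simp⟩
  change ((b' - n : ℝ) : 𝕊) = b'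
  rw [AddCircle.coe_sub, this, sub_zero]

theorem links_of_pos {x y z w : 𝕊} (hz : PosOrdered x z y) (hw : PosOrdered y w x) :
    Links x y z w := by
  obtain ⟨a, b, c, h1, h2, h3, rfl, rfl, rfl⟩ := hz
  have hwa : w ≠ (a : 𝕊) := by
    obtain ⟨c', d, a', g1, g2, g3, _, rfl, ha⟩ := hw
    rw [ha]; intro h
    have := coe_inj_of h (by linarith) (by linarith)
    linarith
  obtain ⟨d, k1, k2, rfl⟩ := exists_lift_s6 a w hwa
  have hcd : c < d := by
    obtain ⟨c', d', a', g1, g2, g3, hc, hd, ha⟩ := hw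
    obtain ⟨n, rfl⟩ := coe_eq_imp hc
    obtain ⟨m, rfl⟩ := coe_eq_imp hd
    obtain ⟨k, rfl⟩ := coe_eq_imp ha
    have e1 : (n : ℝ) < k := by linarith
    have e2 : (k : ℝ) < n + 2 := by linarith
    have e1' : n < k := by exact_mod_cast e1
    have e2' : k < n + 2 := by exact_mod_cast e2
    have e3 : k = n + 1 := by omega
    subst e3
    push_cast at *
    have e4 : (m : ℝ) < n + 1 := by linarith
    have e4' : m < n + 1 := by exact_mod_cast e4
    have e5 : (m : ℝ) ≤ n := by exact_mod_cast (by omega : m ≤ n)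
    linarith
  set U : Set 𝕊 := (fun t : ℝ => (t : 𝕊)) '' Set.Ioo a c with hU
  set V : Set 𝕊 := (fun t : ℝ => (t : 𝕊)) '' Set.Ioo c (a + 1) with hV
  have hUo : IsOpen U := QuotientAddGroup.isOpenMap_coe _ isOpen_Ioo
  have hVo : IsOpen V := QuotientAddGroup.isOpenMap_coe _ isOpen_Ioo
  have hdisj : Disjoint U V := by
    rw [Set.disjoint_left]
    rintro _ ⟨t, ⟨ht1, ht2⟩, rfl⟩ ⟨s, ⟨hs1, hs2⟩, h⟩
    have := coe_inj_of (a := s) (b := t) h (by linarith) (by linarith)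
    linarith
  have hcov : ({(a : 𝕊), (c : 𝕊)}ᶜ : Set 𝕊) ⊆ U ∪ V := by
    intro p hp
    simp only [Set.mem_compl_iff, Set.mem_insert_iff, Set.mem_singleton_iff, not_or] at hp
    obtain ⟨t, t1, t2, rfl⟩ := exists_lift_s6 a p hp.1
    rcases lt_trichotomy t c with h | h | h
    · exact Or.inl ⟨t, ⟨t1, h⟩, rfl⟩
    · exact absurd (by rw [h]) hp.2
    · exact Or.inr ⟨t, ⟨h, t2⟩, rfl⟩
  have hmem : ∀ t : ℝ, a < t → t < a + 1 → t ≠ c → (t : 𝕊) ∈ ({(a : 𝕊), (c : 𝕊)}ᶜ : Set 𝕊) := by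
    rintro t t1 t2 t3 (h | h)
    · have := coe_inj_of (a := t) (b := a) h (by linarith) (by linarith)
      linarith
    · exact t3 (coe_inj_of (a := t) (b := c) h (by linarith) (by linarith))
  have hb := hmem b h1 (by linarith) (by linarith)
  have hd := hmem d k1 k2 hcd.ne'
  refine ⟨hb, hd, fun heq => ?_⟩
  have hbU : (b : 𝕊) ∈ U := ⟨b, ⟨h1, h2⟩, rfl⟩
  have hdV : (d : 𝕊) ∈ V := ⟨d, ⟨hcd, k2⟩, rfl⟩
  have hsub := (isPreconnected_connectedComponentIn (F := ({(a : 𝕊), (c : 𝕊)}ᶜ : Set 𝕊))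
    (x := (b : 𝕊))).subset_left_of_subset_union hUo hVo hdisj
    ((connectedComponentIn_subset _ _).trans hcov)
    ⟨_, mem_connectedComponentIn hb, hbU⟩
  have hdU : (d : 𝕊) ∈ U := hsub (by rw [heq]; exact mem_connectedComponentIn hd)
  exact Set.disjoint_left.1 hdisj hdU hdV

theorem links_symm {x y z w : 𝕊} (h : Links x y z w) : Links y x z w := by
  unfold Links at *
  rwa [Set.pair_comm y x]

theorem links_elim {x y z w : 𝕊} (hxy : x ≠ y) (h : Links x y z w) :
    (PosOrdered x z y ∧ PosOrdered y w x) ∨ (PosOrdered y z x ∧ PosOrdered x w y) := by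
  have h' := links_symm h
  obtain ⟨hz, hw, hne⟩ := h
  simp only [Set.mem_compl_iff, Set.mem_insert_iff, Set.mem_singleton_iff, not_or] at hz hw
  rcases pos_total hxy (Ne.symm hz.1) (Ne.symm hz.2) with a | a <;>
  rcases pos_total hxy (Ne.symm hw.1) (Ne.symm hw.2) with b | b
  · exact absurd (same_comp (pos_cycle a) (pos_cycle b)) h'.2.2
  · exact Or.inr ⟨pos_cycle a, b⟩
  · exact Or.inl ⟨a, pos_cycle b⟩
  · exact absurd (same_comp a b) hne


/-- **Pushforward of a laminar relation under a monotone map.**  If `R` is a laminar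
relation on the circle and `φ` is a monotone map of the circle, then
`φ(R) = {(φ x, φ y) : (x, y) ∈ R, φ x ≠ φ y}` is again a laminar relation:  symmetric,
closed in `𝕊 × 𝕊` minus the diagonal, and unlinked. -/
theorem monotone_image_laminar (R : Set (𝕊 × 𝕊)) (hR : IsLaminar R)
    (φ : 𝕊 → 𝕊) (hφ : IsMonotoneCircleMap φ) :
    IsLaminar {p : 𝕊 × 𝕊 | ∃ x y : 𝕊, (x, y) ∈ R ∧ φ x ≠ φ y ∧ p = (φ x, φ y)} := by
  obtain ⟨hoff, hsymm, hcl, hunl⟩ := hR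
  refine ⟨?_, ?_, ?_, ?_⟩
  · rintro _ ⟨x, y, _, h, rfl⟩
    exact h
  · rintro _ _ ⟨x, y, hxy, h, he⟩
    obtain ⟨rfl, rfl⟩ := Prod.mk.inj he
    exact ⟨y, x, hsymm _ _ hxy, h.symm, rfl⟩
  · have : Fact ((0 : ℝ) < 1) := ⟨one_pos⟩
    rintro p ⟨hp, hpo⟩
    have hcomp : IsCompact (Prod.map φ φ '' closure R) :=
      isClosed_closure.isCompact.image (hφ.1.prodMap hφ.1)
    have hsub : closure {p : 𝕊 × 𝕊 | ∃ x y : 𝕊, (x, y) ∈ R ∧ φ x ≠ φ y ∧ p = (φ x, φ y)} ⊆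
        Prod.map φ φ '' closure R := by
      apply closure_minimal _ hcomp.isClosed
      rintro _ ⟨x, y, hxy, _, rfl⟩
      exact ⟨(x, y), subset_closure hxy, rfl⟩
    obtain ⟨⟨x, y⟩, hxy, rfl⟩ := hsub hp
    have hne : φ x ≠ φ y := hpo
    exact ⟨x, y, hcl ⟨hxy, fun e => hne (congrArg φ e)⟩, hne, rfl⟩
  · rintro _ _ _ _ ⟨x, y, hxy, h, he⟩ ⟨z, w, hzw, h', he'⟩ hl
    obtain ⟨rfl, rfl⟩ := Prod.mk.inj he
    obtain ⟨rfl, rfl⟩ := Prod.mk.inj he'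
    have hz := hl.1
    have hw := hl.2.1
    simp only [Set.mem_compl_iff, Set.mem_insert_iff, Set.mem_singleton_iff, not_or] at hz hw
    rcases links_elim h hl with ⟨a, b⟩ | ⟨a, b⟩
    · exact hunl _ _ _ _ hxy hzw (links_of_pos
        (pos_reflect hφ a (Ne.symm hz.1) h hz.2) (pos_reflect hφ b (Ne.symm hw.2) h.symm hw.1))
    · exact hunl _ _ _ _ hxy hzw (links_symm (links_of_pos
        (pos_reflect hφ a (Ne.symm hz.2) h.symm hz.1) (pos_reflect hφ b (Ne.symm hw.1) h hw.2)))
end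

section
/- Let Y be a metric space, let X ⊆ Y be a subset equipped with its own metric d_X, and suppose there is a function F : ℝ≥0 → ℝ≥0 such that for all a, b ∈ X and r ≥ 0, if d_Y(a,b) ≤ r then d_X(a,b) ≤ F(r) (X is uniformly properly embedded in Y). Let p, q ∈ X and let γ : [0,1] → Y be a continuous path from p to q of finite length ℓ such that every point γ(s) lies within distance t of X (there exists x ∈ X with d_Y(γ(s), x) ≤ t). Then d_X(p,q) ≤ (ℓ + 1) · F(2t + 1). [This is the metric estimate underlying the paper's lemma that each leaf is coarsely quasi-isometrically embedded in a bounded neighborhood of itself.] -/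
/-- **Coarse quasi-isometric embedding estimate.**

Let `Y` be a metric space and `X ⊆ Y` a subset equipped with its own metric `dX`, uniformly
properly embedded with gauge `F`: for `a, b ∈ X` and `r ≥ 0`, if `d_Y(a,b) ≤ r` then
`dX(a,b) ≤ F r`.  Let `p, q ∈ X` and let `γ` be a continuous path in `Y` from `p` to `q` of
finite length `ℓ`, every point of which lies within distance `t` of `X`.  Then
`dX(p, q) ≤ (ℓ + 1) · F (2 t + 1)`. -/
theorem uniformly_proper_neighborhood_estimate
    {Y : Type*} [MetricSpace Y] (X : Set Y)
    (dX : X → X → ℝ)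
    (dX_self : ∀ a : X, dX a a = 0)
    (dX_symm : ∀ a b : X, dX a b = dX b a)
    (dX_triangle : ∀ a b c : X, dX a c ≤ dX a b + dX b c)
    (F : ℝ → ℝ) (hF_nonneg : ∀ r : ℝ, 0 ≤ r → 0 ≤ F r)
    (hgauge : ∀ (a b : X) (r : ℝ), 0 ≤ r → dist (a : Y) (b : Y) ≤ r → dX a b ≤ F r)
    (p q : X) (γ : ℝ → Y) (hγcont : ContinuousOn γ (Set.Icc 0 1))
    (hγ0 : γ 0 = p) (hγ1 : γ 1 = q)
    (ℓ : ℝ) (hℓ : 0 ≤ ℓ) (hlen : eVariationOn γ (Set.Icc 0 1) = ENNReal.ofReal ℓ)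
    (t : ℝ) (ht : 0 ≤ t)
    (hnear : ∀ s ∈ Set.Icc (0 : ℝ) 1, ∃ x : X, dist (γ s) (x : Y) ≤ t) :
    dX p q ≤ (ℓ + 1) * F (2 * t + 1) := by
  have hC : 0 ≤ F (2 * t + 1) := hF_nonneg _ (by linarith)
  have key : ∀ n : ℕ, ∀ a ∈ Set.Icc (0 : ℝ) 1, ∀ x : X, dist (γ a) (x : Y) ≤ t →
      eVariationOn γ (Set.Icc a 1) < (n : ENNReal) + 1 →
      dX x q ≤ ((n : ℝ) + 1) * F (2 * t + 1) := by
    intro n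
    induction n with
    | zero =>
      intro a ha x hx hv
      have h1 : edist (γ a) (γ 1) ≤ eVariationOn γ (Set.Icc a 1) :=
        eVariationOn.edist_le γ (Set.left_mem_Icc.2 ha.2) (Set.right_mem_Icc.2 ha.2)
      have h2 : edist (γ a) (γ 1) ≤ ENNReal.ofReal 1 := by
        rw [ENNReal.ofReal_one]
        exact h1.trans (by simpa using hv.le)
      rw [edist_dist, ENNReal.ofReal_le_ofReal_iff zero_le_one, hγ1] at h2
      have h3 := hgauge x q (2 * t + 1) (by linarith) (by
        have := dist_triangle (x : Y) (γ a) q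
        rw [dist_comm (x : Y) (γ a)] at this
        linarith)
      simpa using h3
    | succ n ih =>
      intro a ha x hx hv
      by_cases hd : dist (γ a) (γ 1) ≤ 1
      · rw [hγ1] at hd
        have h3 := hgauge x q (2 * t + 1) (by linarith) (by
          have := dist_triangle (x : Y) (γ a) q
          rw [dist_comm (x : Y) (γ a)] at this
          linarith)
        have : 0 ≤ ((n + 1 : ℕ) : ℝ) * F (2 * t + 1) := by positivity
        linarith
      · push Not at hd
        have hc : ContinuousOn (fun s => dist (γ a) (γ s)) (Set.Icc a 1) :=
          (continuous_const.dist continuous_id).comp_continuousOn (hγcont.mono (Set.Icc_subset_Icc_left ha.1))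
        obtain ⟨s, hs, hs1⟩ := intermediate_value_Icc ha.2 hc
          (show (1 : ℝ) ∈ Set.Icc _ _ from ⟨by simp, hd.le⟩)
        have hs01 : s ∈ Set.Icc (0 : ℝ) 1 := ⟨ha.1.trans hs.1, hs.2⟩
        obtain ⟨y, hy⟩ := hnear s hs01
        have hadd := eVariationOn.Icc_add_Icc γ (s := Set.univ) hs.1 hs.2 (Set.mem_univ s)
        simp only [Set.univ_inter] at hadd
        have h1 : edist (γ a) (γ s) ≤ eVariationOn γ (Set.Icc a s) :=
          eVariationOn.edist_le γ (Set.left_mem_Icc.2 hs.1) (Set.right_mem_Icc.2 hs.1)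
        have hs2 : dist (γ a) (γ s) = 1 := hs1
        rw [edist_dist, hs2, ENNReal.ofReal_one] at h1
        have h4 : eVariationOn γ (Set.Icc s 1) < (n : ENNReal) + 1 := by
          by_contra hcon
          push Not at hcon
          have := add_le_add h1 hcon
          rw [hadd] at this
          refine absurd (this.trans_lt hv) (not_lt.2 (le_of_eq ?_))
          push_cast
          ring
        have h5 := ih s hs01 y hy h4
        have h3 := hgauge x y (2 * t + 1) (by linarith) (by
          have e1 := dist_triangle4 (x : Y) (γ a) (γ s) y
          rw [dist_comm (x : Y) (γ a)] at e1
          linarith)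
        have := dX_triangle x y q
        push_cast
        linarith
  have hfl := key ⌊ℓ⌋₊ 0 (by simp) p (by rw [hγ0]; simpa using ht) (by
    rw [hlen, ENNReal.ofReal_lt_iff_lt_toReal hℓ (by finiteness)]
    rw [ENNReal.toReal_add (by finiteness) (by finiteness)]
    simpa using Nat.lt_floor_add_one ℓ)
  refine hfl.trans (mul_le_mul_of_nonneg_right ?_ hC)
  linarith [Nat.floor_le hℓ]
end
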